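/- arXiv:1910.04911 — 4 statements merged into one kernel-verified Lean document; each statement's English description precedes it below -/
import Mathlib

section
/- Let n ≥ 1, d ≥ 1 and W ≥ 0 be integers. Let A, B be n×n integer matrices, let C = A⋆B be their Min-Plus product, let C̃ be an n×n integer matrix with |C̃_{i,j} − C_{i,j}| ≤ W for all i, j, and let X, Y : [n] → ℤ^d satisfy |B_{k,j} − X(k)ᵀY(j)| ≤ W for all k, j. Define S to be the set of triples (i, k, j) ∈ [n]³ with A_{i,k} + X(k)ᵀY(j) ≤ 2W + C̃_{i,j}. Then: (1) every strongly relevant triple belongs to S, and (2) every triple in S is weakly relevant. -/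
/-- Min-Plus product of two `(n+1) × (n+1)` integer matrices. -/
def minPlus {n : ℕ} (A B : Fin (n+1) → Fin (n+1) → ℤ) : Fin (n+1) → Fin (n+1) → ℤ :=
  fun i j => Finset.univ.inf' Finset.univ_nonempty (fun k => A i k + B k j)

theorem isGLB_minPlus {n : ℕ} (A B : Fin (n + 1) → Fin (n + 1) → ℤ) (i j : Fin (n + 1)) :
    IsGLB (Set.range fun k => A i k + B k j) (minPlus A B i j) :=
  ⟨Set.forall_mem_range.2 fun k => Finset.inf'_le _ (Finset.mem_univ k),
    fun _ hlower => Finset.le_inf' _ _ fun k _ => hlower (Set.mem_range_self k)⟩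

section OrderedGroup

variable {G : Type*} [AddCommGroup G] [LinearOrder G] [IsOrderedAddMonoid G]

theorem add_le_add_add_of_abs_sub_le {a b b' c c' δ ε : G} (hb : |b - b'| ≤ δ)
    (hc : |c' - c| ≤ ε) (h : a + b ≤ c) : a + b' ≤ δ + ε + c' := by
  have hb' : b' ≤ δ + b := sub_le_iff_le_add.1 (abs_sub_le_iff.1 hb).2
  have hc' : c ≤ ε + c' := sub_le_iff_le_add.1 (abs_sub_le_iff.1 hc).2
  calc
    a + b' ≤ a + (δ + b) := by gcongr
    _ = δ + (a + b) := add_left_comm a δ b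
    _ ≤ δ + (ε + c') := add_le_add_right (h.trans hc') δ
    _ = δ + ε + c' := (add_assoc δ ε c').symm

theorem abs_add_sub_le_max_of_abs_sub_le {a b b' c c' δ ε τ : G} (hb : |b - b'| ≤ δ)
    (hc : |c' - c| ≤ ε) (hle : c ≤ a + b) (h : a + b' ≤ τ + c') :
    |a + b - c'| ≤ max (δ + τ) ε := by
  have hb' : b ≤ δ + b' := sub_le_iff_le_add.1 (abs_sub_le_iff.1 hb).1
  have hc' : c' ≤ ε + c := sub_le_iff_le_add.1 (abs_sub_le_iff.1 hc).1
  have upper : a + b ≤ δ + τ + c' := calc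
    a + b ≤ a + (δ + b') := by gcongr
    _ = δ + (a + b') := add_left_comm a δ b'
    _ ≤ δ + (τ + c') := by gcongr
    _ = δ + τ + c' := (add_assoc δ τ c').symm
  have lower : c' ≤ ε + (a + b) := hc'.trans (by gcongr)
  exact abs_sub_le_iff.2 ⟨le_max_of_le_left (sub_le_iff_le_add.2 upper),
    le_max_of_le_right (sub_le_iff_le_add.2 lower)⟩

theorem stmt2_general {ι κ μ : Type*} {W : G} {A : ι → κ → G} {B D : κ → μ → G}
    {C Ct : ι → μ → G} (hC : ∀ i j, IsGLB (Set.range fun k => A i k + B k j) (C i j))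
    (hCt : ∀ i j, |Ct i j - C i j| ≤ W) (hD : ∀ k j, |B k j - D k j| ≤ W) :
    (∀ i k j, A i k + B k j = C i j → A i k + D k j ≤ 2 • W + Ct i j) ∧
    (∀ i k j, A i k + D k j ≤ 2 • W + Ct i j → |A i k + B k j - Ct i j| ≤ 3 • W) := by
  refine ⟨fun i k j strong => ?_, fun i k j mem => ?_⟩
  · rw [two_nsmul]
    exact add_le_add_add_of_abs_sub_le (hD k j) (hCt i j) strong.le
  · have hW : 0 ≤ W := (abs_nonneg _).trans (hD k j)
    have C_le : C i j ≤ A i k + B k j := (hC i j).1 (Set.mem_range_self k)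
    calc
      |A i k + B k j - Ct i j| ≤ max (W + 2 • W) W :=
        abs_add_sub_le_max_of_abs_sub_le (hD k j) (hCt i j) C_le mem
      _ = W + 2 • W := max_eq_left (le_add_of_nonneg_right (nsmul_nonneg hW 2))
      _ = 3 • W := (succ_nsmul' W 2).symm

end OrderedGroup

/-- The set `S = {(i,k,j) : A_{i,k} + X(k)ᵀY(j) ≤ 2W + C̃_{i,j}}` contains every
strongly relevant triple, and every triple of `S` is weakly relevant. -/
theorem stmt2 {n d : ℕ} (hd : 1 ≤ d) (W : ℤ) (hW : 0 ≤ W)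
    (A B Ct : Fin (n+1) → Fin (n+1) → ℤ)
    (hCt : ∀ i j, |Ct i j - minPlus A B i j| ≤ W)
    (X Y : Fin (n+1) → Fin d → ℤ)
    (hXY : ∀ k j, |B k j - ∑ t, X k t * Y j t| ≤ W) :
    (∀ i k j, A i k + B k j = minPlus A B i j →
        A i k + ∑ t, X k t * Y j t ≤ 2 * W + Ct i j) ∧
    (∀ i k j, A i k + ∑ t, X k t * Y j t ≤ 2 * W + Ct i j →
        |A i k + B k j - Ct i j| ≤ 3 * W) := by
  simpa only [nsmul_eq_mul, Nat.cast_ofNat] using stmt2_general (isGLB_minPlus A B) hCt hXY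
end

section
/- Let n ≥ 2, ρ ≥ 1 and W ≥ 0 be integers with ρ ≤ n, let A, B, C̃ be n×n integer matrices, and set R = ⌈10ρ ln n⌉. Let j¹, j², …, j^R be drawn independently and uniformly at random from [n]. Call a pair (i, k) ∈ [n]² uncovered if |A_{i,k} + B_{k,j^r} − C̃_{i,j^r}| > 3W for every r ∈ [R]. Then with probability at least 1 − n^{−8}, the number of triples (i, k, j) ∈ [n]³ that are weakly relevant and whose pair (i, k) is uncovered is at most n³/ρ. -/
open scoped Classical

/-!
For a pair `q = (i, k)` let `S q` be the set of `j` such that `(i, k, j)` is weakly relevant; then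
`q` is uncovered exactly when the sample misses `S q`. Pairs with `#(S q) ≤ n / ρ` contribute at
most `n² · n / ρ` triples whatever the sample is, so the bound can only fail when some `S q` of
density more than `1 / ρ` is missed. A fixed such set is missed with probability at most
`(1 - 1 / ρ) ^ R ≤ exp (-R / ρ) ≤ n⁻¹⁰`, and there are at most `n²` of them.
-/

section

open Finset

variable {ι κ α : Type*} [Fintype ι] [Fintype κ] [Fintype α] [DecidableEq α]

/-- The incidences `a ∈ S q` of the set family `S`, as pairs `(q, a)`, for those `q` whose set
contains no point of the sample `x`. With `q = (i, k)` and `S q` the set of `j` making `(i, k, j)`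
weakly relevant, these are the weakly relevant triples whose pair is uncovered. -/
def missedIncidences (S : ι → Finset α) (x : κ → α) : Finset (ι × α) :=
  {p | p.2 ∈ S p.1 ∧ ∀ r, x r ∉ S p.1}

theorem card_missedIncidences (S : ι → Finset α) (x : κ → α) :
    #(missedIncidences S x) = ∑ q with ∀ r, x r ∉ S q, #(S q) := by
  have missed_eq_sigma : missedIncidences S x =
      (({q | ∀ r, x r ∉ S q} : Finset ι).sigma S).map (Equiv.sigmaEquivProd ι α).toEmbedding := by
    ext ⟨q, a⟩
    simp [missedIncidences, and_comm]
  rw [missed_eq_sigma, card_map, card_sigma]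

theorem card_missedIncidences_le {S : ι → Finset α} {x : κ → α} {b : ℝ} (hb : 0 ≤ b)
    (hx : ∀ q, (∀ r, x r ∉ S q) → #(S q) ≤ b) :
    (#(missedIncidences S x) : ℝ) ≤ Fintype.card ι * b := by
  rw [card_missedIncidences, Nat.cast_sum]
  calc ∑ q with ∀ r, x r ∉ S q, (#(S q) : ℝ)
      ≤ #{q | ∀ r, x r ∉ S q} • b :=
        sum_le_card_nsmul _ _ _ fun q hq => hx q (mem_filter_univ q |>.mp hq)
    _ ≤ Fintype.card ι * b := by
        rw [nsmul_eq_mul]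
        gcongr
        exact card_le_univ _

variable [DecidableEq κ]

theorem card_filter_forall_notMem (S : Finset α) :
    #{x : κ → α | ∀ r, x r ∉ S} = #Sᶜ ^ Fintype.card κ := by
  have avoiding_eq_piFinset :
      ({x : κ → α | ∀ r, x r ∉ S} : Finset (κ → α)) = Fintype.piFinset fun _ => Sᶜ := by
    ext x
    simp
  rw [avoiding_eq_piFinset, Fintype.card_piFinset, prod_const, card_univ]

theorem card_compl_le_mul_exp_neg {S : Finset α} {δ : ℝ} (hS : δ * Fintype.card α ≤ #S) :
    (#Sᶜ : ℝ) ≤ Fintype.card α * Real.exp (-δ) := by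
  have card_add : (#Sᶜ : ℝ) + #S = Fintype.card α := mod_cast card_compl_add_card S
  calc (#Sᶜ : ℝ) ≤ Fintype.card α * (1 - δ) := by linarith
    _ ≤ Fintype.card α * Real.exp (-δ) := by gcongr; exact Real.one_sub_le_exp_neg δ

theorem card_filter_forall_notMem_le {S : Finset α} {δ : ℝ} (hS : δ * Fintype.card α ≤ #S) :
    (#{x : κ → α | ∀ r, x r ∉ S} : ℝ) ≤
      (Fintype.card α : ℝ) ^ Fintype.card κ * Real.exp (-(δ * Fintype.card κ)) := by
  rw [card_filter_forall_notMem, Nat.cast_pow]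
  calc (#Sᶜ : ℝ) ^ Fintype.card κ
      ≤ (Fintype.card α * Real.exp (-δ)) ^ Fintype.card κ := by
        gcongr
        exact card_compl_le_mul_exp_neg hS
    _ = (Fintype.card α : ℝ) ^ Fintype.card κ * Real.exp (-(δ * Fintype.card κ)) := by
        rw [mul_pow, ← Real.exp_nat_mul]
        ring_nf

theorem card_filter_lt_card_missedIncidences_le (S : ι → Finset α) {δ : ℝ} (hδ : 0 ≤ δ) :
    (#{x : κ → α | Fintype.card ι * (δ * Fintype.card α) < (#(missedIncidences S x) : ℝ)} : ℝ) ≤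
      Fintype.card ι *
        ((Fintype.card α : ℝ) ^ Fintype.card κ * Real.exp (-(δ * Fintype.card κ))) := by
  let large : Finset ι := {q | δ * Fintype.card α < #(S q)}
  have bad_subset :
      ({x : κ → α | Fintype.card ι * (δ * Fintype.card α) < (#(missedIncidences S x) : ℝ)} :
        Finset (κ → α)) ⊆ large.biUnion fun q => {x | ∀ r, x r ∉ S q} := by
    intro x hx
    contrapose! hx
    simp only [large, mem_biUnion, mem_filter_univ, not_exists, not_and', not_lt] at hx ⊢
    exact card_missedIncidences_le (by positivity) hx
  calc _ ≤ ∑ q ∈ large, (#{x : κ → α | ∀ r, x r ∉ S q} : ℝ) :=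
        mod_cast (card_le_card bad_subset).trans card_biUnion_le
    _ ≤ #large • ((Fintype.card α : ℝ) ^ Fintype.card κ * Real.exp (-(δ * Fintype.card κ))) :=
        sum_le_card_nsmul _ _ _ fun q hq =>
          card_filter_forall_notMem_le (mem_filter_univ q |>.mp hq).le
    _ ≤ _ := by
        rw [nsmul_eq_mul]
        gcongr
        exact card_le_univ _

theorem one_sub_le_card_filter_card_missedIncidences_le_div [Nonempty α] (S : ι → Finset α)
    {δ : ℝ} (hδ : 0 ≤ δ) :
    1 - Fintype.card ι * Real.exp (-(δ * Fintype.card κ)) ≤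
      (#{x : κ → α | (#(missedIncidences S x) : ℝ) ≤ Fintype.card ι * (δ * Fintype.card α)} : ℝ) /
        (Fintype.card α : ℝ) ^ Fintype.card κ := by
  have bad_le := card_filter_lt_card_missedIncidences_le (κ := κ) S hδ
  have good_add_bad := card_filter_add_card_filter_not (s := (univ : Finset (κ → α)))
    fun x => (#(missedIncidences S x) : ℝ) ≤ Fintype.card ι * (δ * Fintype.card α)
  simp only [not_le, card_univ, Fintype.card_fun] at good_add_bad
  rify at good_add_bad
  rw [le_div_iff₀ (by positivity)]
  linarith

theorem exp_neg_le_zpow_neg {x t : ℝ} {m : ℕ} (hx : 0 < x) (ht : m * Real.log x ≤ t) :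
    Real.exp (-t) ≤ x ^ (-(m : ℤ)) := by
  calc Real.exp (-t) ≤ Real.exp (-(m * Real.log x)) := by gcongr
    _ = x ^ (-(m : ℤ)) := by
        rw [Real.exp_neg, Real.exp_nat_mul, Real.exp_log hx, zpow_neg, zpow_natCast]

theorem stmt4_general {n R : ℕ} (hn : 1 ≤ n) {ρ : ℝ} (hρ : 0 < ρ) (hR : 10 * ρ * Real.log n ≤ R)
    (P : Fin n → Fin n → Fin n → Prop) :
    1 - (n : ℝ) ^ (-(8 : ℤ)) ≤
      (#{js : Fin R → Fin n |
          (#{p : Fin n × Fin n × Fin n |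
              P p.1 p.2.1 p.2.2 ∧ ∀ r, ¬ P p.1 p.2.1 (js r)} : ℝ) ≤ (n : ℝ) ^ 3 / ρ} : ℝ) /
        (n : ℝ) ^ R := by
  have : NeZero n := ⟨by lia⟩
  have hn_pos : (0 : ℝ) < n := mod_cast hn
  let S : Fin n × Fin n → Finset (Fin n) := fun q => {j | P q.1 q.2 j}
  have card_triples (js : Fin R → Fin n) :
      #{p : Fin n × Fin n × Fin n | P p.1 p.2.1 p.2.2 ∧ ∀ r, ¬ P p.1 p.2.1 (js r)} =
        #(missedIncidences S js) :=
    card_equiv (Equiv.prodAssoc _ _ _).symm fun p => by simp [missedIncidences, S]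
  have miss_le : Real.exp (-(ρ⁻¹ * R)) ≤ (n : ℝ) ^ (-(10 : ℤ)) := by
    refine exp_neg_le_zpow_neg (m := 10) hn_pos ?_
    rw [inv_mul_eq_div, le_div_iff₀ hρ]
    push_cast
    linarith
  have union_le : (n * n : ℝ) * Real.exp (-(ρ⁻¹ * R)) ≤ (n : ℝ) ^ (-(8 : ℤ)) :=
    calc (n * n : ℝ) * Real.exp (-(ρ⁻¹ * R)) ≤ n * n * (n : ℝ) ^ (-(10 : ℤ)) := by gcongr
      _ = (n : ℝ) ^ (-(8 : ℤ)) := by field_simp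
  have threshold_eq : (n * n : ℝ) * (ρ⁻¹ * n) = (n : ℝ) ^ 3 / ρ := by ring
  have sample_bound := one_sub_le_card_filter_card_missedIncidences_le_div (κ := Fin R) S
    (inv_nonneg.mpr hρ.le)
  simp only [Fintype.card_prod, Fintype.card_fin, Nat.cast_mul, threshold_eq] at sample_bound
  simpa only [card_triples] using (sub_le_sub_left union_le 1).trans sample_bound

end

/-- With `R = ⌈10 ρ ln n⌉` uniformly random independent samples `j¹,…,j^R ∈ [n]`,
with probability at least `1 - n^{-8}` the number of weakly relevant triples `(i,k,j)`
whose pair `(i,k)` is uncovered is at most `n³/ρ`. -/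
theorem stmt4 (n ρ : ℕ) (hn : 2 ≤ n) (hρ : 1 ≤ ρ) (hρn : ρ ≤ n) (W : ℤ) (hW : 0 ≤ W)
    (A B Ct : Fin n → Fin n → ℤ) :
    1 - (n : ℝ) ^ (-(8 : ℤ)) ≤
      ((Finset.univ.filter (fun js : Fin (⌈(10 * ρ : ℝ) * Real.log n⌉₊) → Fin n =>
          ((Finset.univ.filter (fun p : Fin n × Fin n × Fin n =>
              |A p.1 p.2.1 + B p.2.1 p.2.2 - Ct p.1 p.2.2| ≤ 3 * W ∧
              ∀ r, 3 * W < |A p.1 p.2.1 + B p.2.1 (js r) - Ct p.1 (js r)|)).card : ℝ)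
            ≤ (n : ℝ) ^ 3 / ρ)).card : ℝ) / (n : ℝ) ^ (⌈(10 * ρ : ℝ) * Real.log n⌉₊) := by
  simpa only [not_le] using stmt4_general (by lia) (Nat.cast_pos.mpr hρ) (Nat.le_ceil _)
    fun i k j => |A i k + B k j - Ct i j| ≤ 3 * W
end

section
/- Let t ≥ 0 be an integer and let B be an n×n integer matrix such that every entry of the t-fold finite difference 𝒟ᵗB has absolute value at most M, i.e. |(𝒟ᵗB)_{i,j}| ≤ M for all valid indices i, j. Then there exist integer vectors X(1), …, X(n) and Y(1), …, Y(n) in ℤ^{2t} such that |B_{i,j} − X(i)ᵀY(j)| ≤ M·n^{2t} for all i, j ∈ [n]. -/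
/-- The finite difference operator on integer matrices (presented as functions on `ℕ × ℕ`). -/
def finDiff (B : ℕ → ℕ → ℤ) : ℕ → ℕ → ℤ :=
  fun i j => B (i+1) (j+1) - B i (j+1) - B (i+1) j + B i j

/-!
Summing the mixed difference of `B` over the rectangle `[0, i) × [0, j)` recovers `B i j` up to a
function of `i` plus a function of `j`, that is, up to a matrix of rank two. Summation over
rectangles maps `X aᵀ Y b` to the inner product of the partial sums of `X` and of `Y`, so it does
not increase the rank. Hence `B` differs from the `t`-fold rectangle sum of its `t`-fold difference
by a matrix of rank at most `2t`. That iterated sum has `(i choose t) (j choose t)` terms, counted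
with multiplicity, each of them bounded by `M`.
-/

open Finset Matrix

variable {R : Type*}

/-- The operator `𝒟` on matrices with entries in an additive group, indexed by `ℕ × ℕ`;
`finDiff` is the case of integer entries. -/
def mixedDiff [AddGroup R] (B : ℕ → ℕ → R) : ℕ → ℕ → R :=
  fun i j => B (i + 1) (j + 1) - B i (j + 1) - B (i + 1) j + B i j

/-- Summation over the rectangle `[0, i) × [0, j)`, a right inverse of `mixedDiff`. -/
def rectSum [AddCommMonoid R] (A : ℕ → ℕ → R) : ℕ → ℕ → R :=
  fun i j => ∑ a ∈ range i, ∑ b ∈ range j, A a b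

theorem rectSum_sub [AddCommGroup R] (A B : ℕ → ℕ → R) (i j : ℕ) :
    rectSum (fun a b => A a b - B a b) i j = rectSum A i j - rectSum B i j := by
  simp only [rectSum, sum_sub_distrib]

theorem rectSum_mixedDiff [AddCommGroup R] (B : ℕ → ℕ → R) (i j : ℕ) :
    rectSum (mixedDiff B) i j = B i j - B i 0 - B 0 j + B 0 0 := by
  have row_sum (a : ℕ) : ∑ b ∈ range j, mixedDiff B a b =
      (B (a + 1) j - B (a + 1) 0) - (B a j - B a 0) :=
    calc ∑ b ∈ range j, mixedDiff B a b
      _ = ∑ b ∈ range j, ((B (a + 1) (b + 1) - B a (b + 1)) - (B (a + 1) b - B a b)) :=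
        sum_congr rfl fun b _ => by rw [mixedDiff]; abel
      _ = (B (a + 1) j - B a j) - (B (a + 1) 0 - B a 0) :=
        sum_range_sub (fun b => B (a + 1) b - B a b) j
      _ = (B (a + 1) j - B (a + 1) 0) - (B a j - B a 0) := by abel
  calc rectSum (mixedDiff B) i j
    _ = ∑ a ∈ range i, ((B (a + 1) j - B (a + 1) 0) - (B a j - B a 0)) :=
      sum_congr rfl fun a _ => row_sum a
    _ = (B i j - B i 0) - (B 0 j - B 0 0) := sum_range_sub (fun a => B a j - B a 0) i
    _ = B i j - B i 0 - B 0 j + B 0 0 := by abel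

theorem rectSum_dotProduct [NonUnitalNonAssocSemiring R] {ι : Type*} [Fintype ι]
    (X Y : ℕ → ι → R) (i j : ℕ) :
    rectSum (fun a b => X a ⬝ᵥ Y b) i j = (∑ a ∈ range i, X a) ⬝ᵥ ∑ b ∈ range j, Y b := by
  rw [sum_dotProduct]
  simp only [rectSum, dotProduct_sum]

theorem exists_sub_dotProduct_eq_rectSum_iterate [NonAssocRing R] (t : ℕ) (B : ℕ → ℕ → R) :
    ∃ X Y : ℕ → Fin (2 * t) → R, ∀ i j,
      B i j - X i ⬝ᵥ Y j = (rectSum^[t] (mixedDiff^[t] B)) i j := by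
  induction t generalizing B with
  | zero => exact ⟨0, 0, fun i j => by simp⟩
  | succ t ih =>
    obtain ⟨X, Y, hXY⟩ := ih (mixedDiff B)
    refine ⟨fun i => vecCons (B i 0 - B 0 0) (vecCons 1 (∑ a ∈ range i, X a)),
      fun j => vecCons 1 (vecCons (B 0 j) (∑ b ∈ range j, Y b)), fun i j => ?_⟩
    symm
    calc (rectSum^[t + 1] (mixedDiff^[t + 1] B)) i j
      _ = rectSum (fun a b => mixedDiff B a b - X a ⬝ᵥ Y b) i j := by
        rw [Function.iterate_succ_apply mixedDiff, Function.iterate_succ_apply' rectSum,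
          funext₂ hXY]
      _ = B i j - B i 0 - B 0 j + B 0 0 - (∑ a ∈ range i, X a) ⬝ᵥ ∑ b ∈ range j, Y b := by
        rw [rectSum_sub, rectSum_mixedDiff, rectSum_dotProduct]
      _ = B i j - vecCons (B i 0 - B 0 0) (vecCons 1 (∑ a ∈ range i, X a)) ⬝ᵥ
          vecCons 1 (vecCons (B 0 j) (∑ b ∈ range j, Y b)) := by
        rw [cons_dotProduct_cons, cons_dotProduct_cons, mul_one, one_mul]
        abel

theorem sum_range_choose_right (n k : ℕ) : ∑ m ∈ range n, m.choose k = n.choose (k + 1) := by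
  induction n with
  | zero => rfl
  | succ n ih => rw [sum_range_succ, ih, Nat.choose_succ_succ', add_comm]

section Bound

variable [AddCommGroup R] [LinearOrder R] [IsOrderedAddMonoid R]

theorem abs_rectSum_le {A C : ℕ → ℕ → R} {i j : ℕ}
    (hAC : ∀ a < i, ∀ b < j, |A a b| ≤ C a b) : |rectSum A i j| ≤ rectSum C i j :=
  (abs_sum_le_sum_abs _ _).trans <| sum_le_sum fun a ha =>
    (abs_sum_le_sum_abs _ _).trans <| sum_le_sum fun b hb =>
      hAC a (mem_range.1 ha) b (mem_range.1 hb)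

theorem abs_rectSum_iterate_le {A : ℕ → ℕ → R} {M : R} {t i j : ℕ}
    (hA : ∀ a b, a + t ≤ i → b + t ≤ j → |A a b| ≤ M) :
    |(rectSum^[t] A) i j| ≤ (i.choose t * j.choose t) • M := by
  induction t generalizing i j with
  | zero => simpa using hA i j le_rfl le_rfl
  | succ t ih =>
    rw [Function.iterate_succ_apply']
    calc |rectSum (rectSum^[t] A) i j|
      _ ≤ rectSum (fun a b => (a.choose t * b.choose t) • M) i j :=
        abs_rectSum_le fun a ha b hb => ih fun a' b' ha' hb' =>
          hA a' b' (by omega) (by omega)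
      _ = (i.choose (t + 1) * j.choose (t + 1)) • M := by
        simp only [rectSum, ← sum_smul, ← sum_mul_sum, sum_range_choose_right]

end Bound

theorem choose_mul_choose_le_pow {i j n : ℕ} (hi : i ≤ n) (hj : j ≤ n) (t : ℕ) :
    i.choose t * j.choose t ≤ n ^ (2 * t) :=
  calc i.choose t * j.choose t
    _ ≤ i ^ t * j ^ t := Nat.mul_le_mul (Nat.choose_le_pow i t) (Nat.choose_le_pow j t)
    _ ≤ n ^ t * n ^ t := by gcongr
    _ = n ^ (2 * t) := by rw [two_mul, pow_add]

theorem stmt5_general [Ring R] [LinearOrder R] [IsOrderedRing R] (n t : ℕ) (M : R) (hM : 0 ≤ M)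
    (B : ℕ → ℕ → R) (hB : ∀ i j, i < n - t → j < n - t → |(mixedDiff^[t] B) i j| ≤ M) :
    ∃ X Y : ℕ → Fin (2 * t) → R, ∀ i j, i < n → j < n →
      |B i j - X i ⬝ᵥ Y j| ≤ M * (n : R) ^ (2 * t) := by
  obtain ⟨X, Y, hXY⟩ := exists_sub_dotProduct_eq_rectSum_iterate t B
  refine ⟨X, Y, fun i j hi hj => ?_⟩
  calc |B i j - X i ⬝ᵥ Y j|
    _ = |(rectSum^[t] (mixedDiff^[t] B)) i j| := by rw [hXY]
    _ ≤ (i.choose t * j.choose t) • M :=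
      abs_rectSum_iterate_le fun a b ha hb => hB a b (by omega) (by omega)
    _ ≤ n ^ (2 * t) • M := nsmul_le_nsmul_left hM (choose_mul_choose_le_pow hi.le hj.le t)
    _ = M * (n : R) ^ (2 * t) := by rw [nsmul_eq_mul', Nat.cast_pow]

/-- If every entry of the `t`-fold finite difference `𝒟ᵗB` of an `n × n` integer matrix `B`
has absolute value at most `M`, then `B` is entrywise within `M·n^{2t}` of a matrix of
rank at most `2t`, witnessed by vectors `X(i), Y(j) ∈ ℤ^{2t}`. -/
theorem stmt5 (n t : ℕ) (M : ℤ) (hM : 0 ≤ M) (B : ℕ → ℕ → ℤ)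
    (hB : ∀ i j, i < n - t → j < n - t → |(finDiff^[t] B) i j| ≤ M) :
    ∃ X Y : ℕ → Fin (2 * t) → ℤ, ∀ i j, i < n → j < n →
      |B i j - ∑ s, X i s * Y j s| ≤ M * (n : ℤ) ^ (2 * t) :=
  stmt5_general n t M hM B hB
end

section
/- Let d ≥ 1 and n ≥ 1 be integers and let w' be a two-sided d-uniform weighted hypergraph on parts of size n. Then there exists a central d-dimensional integer array A with side length 2n+1 (indexed by {−n, …, n}^d, with A[i] = 0 whenever some coordinate of i is 0) such that the central maximum subarray sum of A equals the maximum hyperclique weight of w'. -/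
/-!
Place the vertices of `U_r` on the negative half and those of `V_r` on the positive half of the
`r`-th axis, so that a cell off the coordinate hyperplanes is a hyperedge and can carry its weight.
A central box has, in every coordinate, one positive and one negative endpoint, hence is a choice
of one vertex from each part; its `2 ^ d` corners are exactly the hyperedges of that hyperclique.
The central subarray sums and the hyperclique weights therefore form the same finite set.
-/

section

variable {ι V M : Type*} [Fintype ι] [DecidableEq ι] [AddCommMonoid M]

/-- The weight of the hyperclique choosing `u r ∈ U_r` and `v r ∈ V_r`. The parts are indexed by
`ι`, all of them are copies of `V`, and `true` stands for the side `U`. -/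
def hypercliqueWeight (w : (ι → Bool × V) → M) (u v : ι → V) : M :=
  ∑ s : ι → Bool, w fun r => (s r, if s r then u r else v r)

/-- The set of all hyperclique weights, whose maximum is the optimum of the hyperclique problem. -/
def hypercliqueWeights (w : (ι → Bool × V) → M) : Set M :=
  {x | ∃ u v : ι → V, x = hypercliqueWeight w u v}

/-- The sum of `A` over the corners of the box spanned by `i` and `i - δ`. The vector
`j ∈ {0,1}^d` of the corner `i - δ ⊙ j` is encoded as a Boolean function. -/
def cornerSum (A : (ι → ℤ) → M) (i δ : ι → ℤ) : M :=
  ∑ j : ι → Bool, A fun r => i r - δ r * (if j r then 1 else 0)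

/-- The corner sums of the central boxes, i.e. those with `i r ∈ [1, n]` and
`i r - δ r ∈ [-n, -1]` for all `r`; the maximum of this set is the central maximum subarray sum.
Arrays are total functions, of which only the entries in `{-n, …, n}^d` are read. -/
def centralCornerSums (n : ℕ) (A : (ι → ℤ) → M) : Set M :=
  {x | ∃ i δ : ι → ℤ,
    (∀ r, 1 ≤ i r ∧ i r ≤ (n : ℤ)) ∧
    (∀ r, 1 ≤ δ r ∧ δ r ≤ 2 * (n : ℤ)) ∧
    (∀ r, -(n : ℤ) ≤ i r - δ r ∧ i r - δ r ≤ -1) ∧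
    x = cornerSum A i δ}

theorem exists_isGreatest_hypercliqueWeights [LinearOrder M] [Finite V] [Nonempty V]
    (w : (ι → Bool × V) → M) : ∃ m, IsGreatest (hypercliqueWeights w) m := by
  obtain ⟨⟨u, v⟩, le_weight⟩ :=
    Finite.exists_max fun p : (ι → V) × (ι → V) => hypercliqueWeight w p.1 p.2
  refine ⟨hypercliqueWeight w u v, ⟨u, v, rfl⟩, ?_⟩
  rintro _ ⟨u', v', rfl⟩
  exact le_weight (u', v')

end

section

variable {ι V M : Type*} [Fintype ι]

/-- The array whose entry at `x` is the weight of the hyperedge encoded by `x`: coordinate `x r`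
selects the vertex `vertexAt (x r)`, on the side `U` if `x r < 0` and on the side `V` if `0 < x r`.
Cells with a zero coordinate encode no hyperedge and carry `0`. -/
def hyperedgeArray [Zero M] (vertexAt : ℤ → V) (w : (ι → Bool × V) → M) (x : ι → ℤ) : M :=
  if ∃ r, x r = 0 then 0 else w fun r => (decide (x r < 0), vertexAt (x r))

theorem hyperedgeArray_of_exists_eq_zero [Zero M] (vertexAt : ℤ → V)
    (w : (ι → Bool × V) → M) {x : ι → ℤ} (hx : ∃ r, x r = 0) : hyperedgeArray vertexAt w x = 0 :=
  if_pos hx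

theorem hyperedgeArray_of_forall_ne_zero [Zero M] (vertexAt : ℤ → V)
    (w : (ι → Bool × V) → M) {x : ι → ℤ} (hx : ∀ r, x r ≠ 0) :
    hyperedgeArray vertexAt w x = w fun r => (decide (x r < 0), vertexAt (x r)) :=
  if_neg (not_exists.mpr hx)

theorem hyperedgeArray_corner [Zero M] (vertexAt : ℤ → V) (w : (ι → Bool × V) → M) {i δ : ι → ℤ}
    (hi : ∀ r, 0 < i r) (hδ : ∀ r, i r - δ r < 0) (j : ι → Bool) :
    hyperedgeArray vertexAt w (fun r => i r - δ r * (if j r then 1 else 0)) =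
      w fun r => (j r, if j r then vertexAt (i r - δ r) else vertexAt (i r)) := by
  have corner_eq : (fun r => i r - δ r * (if j r then 1 else 0)) =
      fun r => if j r then i r - δ r else i r := by
    funext r
    cases j r <;> simp
  have corner_ne_zero : ∀ r, (if j r then i r - δ r else i r) ≠ 0 := by
    intro r
    split
    · exact (hδ r).ne
    · exact (hi r).ne'
  rw [corner_eq, hyperedgeArray_of_forall_ne_zero vertexAt w corner_ne_zero]
  congr 1
  funext r
  cases j r
  · simp [(hi r).le]
  · simpa using hδ r

theorem cornerSum_hyperedgeArray [DecidableEq ι] [AddCommMonoid M] (vertexAt : ℤ → V)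
    (w : (ι → Bool × V) → M) {i δ : ι → ℤ} (hi : ∀ r, 0 < i r) (hδ : ∀ r, i r - δ r < 0) :
    cornerSum (hyperedgeArray vertexAt w) i δ =
      hypercliqueWeight w (fun r => vertexAt (i r - δ r)) (fun r => vertexAt (i r)) :=
  Finset.sum_congr rfl fun j _ => hyperedgeArray_corner vertexAt w hi hδ j

end

section

variable {n : ℕ} [NeZero n]

/-- The vertex placed at the positions `z` and `-z` of an axis. Positions are counted from `1` and
the elements of `Fin n` from `0`; the value is meaningful only for `1 ≤ |z| ≤ n`. -/
def axisVertex (n : ℕ) [NeZero n] (z : ℤ) : Fin n :=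
  Fin.ofNat n (z.natAbs - 1)

theorem axisVertex_neg (z : ℤ) : axisVertex n (-z) = axisVertex n z := by
  rw [axisVertex, axisVertex, Int.natAbs_neg]

theorem axisVertex_add_one (a : Fin n) : axisVertex n ((a : ℤ) + 1) = a := by
  have natAbs_sub_one : ((a : ℤ) + 1).natAbs - 1 = a := by omega
  rw [axisVertex, natAbs_sub_one, Fin.ofNat_eq_cast, Fin.cast_val_eq_self]

variable {ι M : Type*} [Fintype ι] [DecidableEq ι] [AddCommMonoid M]

theorem hypercliqueWeight_mem_centralCornerSums (w : (ι → Bool × Fin n) → M) (u v : ι → Fin n) :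
    hypercliqueWeight w u v ∈ centralCornerSums n (hyperedgeArray (axisVertex n) w) := by
  let i : ι → ℤ := fun r => (v r : ℤ) + 1
  let δ : ι → ℤ := fun r => ((v r : ℤ) + 1) + ((u r : ℤ) + 1)
  have sub_eq : ∀ r, i r - δ r = -((u r : ℤ) + 1) := fun r => sub_add_cancel_left _ _
  refine ⟨i, δ, fun r => ?_, fun r => ?_, fun r => ?_, ?_⟩
  · grind
  · grind
  · grind
  · rw [cornerSum_hyperedgeArray _ _ (by grind) (by grind)]
    simp only [sub_eq, axisVertex_neg, axisVertex_add_one, i]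

theorem centralCornerSums_hyperedgeArray (w : (ι → Bool × Fin n) → M) :
    centralCornerSums n (hyperedgeArray (axisVertex n) w) = hypercliqueWeights w := by
  apply Set.Subset.antisymm
  · rintro _ ⟨i, δ, hi, -, hδ, rfl⟩
    exact ⟨_, _, cornerSum_hyperedgeArray _ _ (fun r => (hi r).1)
      (fun r => (hδ r).2.trans_lt neg_one_lt_zero)⟩
  · rintro _ ⟨u, v, rfl⟩
    exact hypercliqueWeight_mem_centralCornerSums w u v

theorem stmt12_general [LinearOrder M] (w : (ι → Bool × Fin n) → M) :
    ∃ A : (ι → ℤ) → M,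
      (∀ i : ι → ℤ, (∃ r, i r = 0) → A i = 0) ∧
      ∃ m : M, IsGreatest (centralCornerSums n A) m ∧ IsGreatest (hypercliqueWeights w) m := by
  obtain ⟨m, hm⟩ := exists_isGreatest_hypercliqueWeights w
  refine ⟨hyperedgeArray (axisVertex n) w,
    fun _ => hyperedgeArray_of_exists_eq_zero _ w, m, ?_, hm⟩
  rwa [centralCornerSums_hyperedgeArray]

end

/-- Reduction from Two-sided `d`-Uniform Max-Weight Hyperclique to Central Maximum
Subarray Sum: for any two-sided `d`-uniform weighted hypergraph `w'` on parts of size `n`,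
there is a central `d`-dimensional integer array `A` (indexed by `{-n,…,n}^d`, vanishing
whenever a coordinate is `0`) whose central maximum subarray sum equals the maximum
hyperclique weight of `w'`. -/
theorem stmt12 (d n : ℕ) (hd : 1 ≤ d) (hn : 1 ≤ n)
    (w' : (Fin d → Bool × Fin n) → ℤ) :
    ∃ A : (Fin d → ℤ) → ℤ,
      (∀ i : Fin d → ℤ, (∃ r, i r = 0) → A i = 0) ∧
      ∃ m : ℤ,
        IsGreatest {x : ℤ | ∃ i δ : Fin d → ℤ,
          (∀ r, 1 ≤ i r ∧ i r ≤ (n : ℤ)) ∧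
          (∀ r, 1 ≤ δ r ∧ δ r ≤ 2 * (n : ℤ)) ∧
          (∀ r, -(n : ℤ) ≤ i r - δ r ∧ i r - δ r ≤ -1) ∧
          x = ∑ j : Fin d → Bool, A (fun r => i r - δ r * (if j r then 1 else 0))} m ∧
        IsGreatest {x : ℤ | ∃ u v : Fin d → Fin n,
          x = ∑ s : Fin d → Bool, w' (fun r => (s r, if s r then u r else v r))} m := by
  have : NeZero n := ⟨Nat.one_le_iff_ne_zero.mp hn⟩
  exact stmt12_general w'
end
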